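/- (Protocol-independent secrecy theorem, Guard_invKey.) For every set G of messages, every natural number n and every set Ks of key indices: if Nonce n ∈ analz G and every message of G lies in guard n Ks, then there exists a key index K ∈ Ks with Key K ∈ analz G. -/

import Mathlib

inductive agent : Type
  | Server : agent
  | Friend : ℕ → agent
  | Spy : agent
deriving DecidableEq

inductive msg : Type
  | Agent : agent → msg
  | Number : ℕ → msg
  | Nonce : ℕ → msg
  | Key : ℕ → msg
  | Hash : msg → msg
  | MPair : msg → msg → msg
  | Crypt : ℕ → msg → msg
deriving DecidableEq

inductive partsP (H : Set msg) : msg → Prop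
  | Inj : ∀ X, X ∈ H → partsP H X
  | Fst : ∀ X Y, partsP H (msg.MPair X Y) → partsP H X
  | Snd : ∀ X Y, partsP H (msg.MPair X Y) → partsP H Y
  | Body : ∀ K X, partsP H (msg.Crypt K X) → partsP H X

/-- `parts H`: sub-components of messages of `H`. -/
def parts (H : Set msg) : Set msg := {X | partsP H X}

inductive analzP (invKey : ℕ → ℕ) (H : Set msg) : msg → Prop
  | Inj : ∀ X, X ∈ H → analzP invKey H X
  | Fst : ∀ X Y, analzP invKey H (msg.MPair X Y) → analzP invKey H X
  | Snd : ∀ X Y, analzP invKey H (msg.MPair X Y) → analzP invKey H Y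
  | Decrypt : ∀ K X, analzP invKey H (msg.Crypt K X) →
      analzP invKey H (msg.Key (invKey K)) → analzP invKey H X

/-- `analz invKey H`: what can be obtained by decomposing and decrypting messages of `H`. -/
def analz (invKey : ℕ → ℕ) (H : Set msg) : Set msg := {X | analzP invKey H X}

inductive synthP (H : Set msg) : msg → Prop
  | Inj : ∀ X, X ∈ H → synthP H X
  | Ag : ∀ a, synthP H (msg.Agent a)
  | Num : ∀ n, synthP H (msg.Number n)
  | Hsh : ∀ X, synthP H X → synthP H (msg.Hash X)
  | Pr : ∀ X Y, synthP H X → synthP H Y → synthP H (msg.MPair X Y)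
  | Cry : ∀ K X, synthP H X → msg.Key K ∈ H → synthP H (msg.Crypt K X)

/-- `synth H`: messages that can be synthesized from `H`. -/
def synth (H : Set msg) : Set msg := {X | synthP H X}

inductive guardP (invKey : ℕ → ℕ) (n : ℕ) (Ks : Set ℕ) : msg → Prop
  | No_Nonce : ∀ X, msg.Nonce n ∉ parts {X} → guardP invKey n Ks X
  | Guard : ∀ K X, invKey K ∈ Ks → guardP invKey n Ks (msg.Crypt K X)
  | Cry : ∀ K X, guardP invKey n Ks X → guardP invKey n Ks (msg.Crypt K X)
  | Pr : ∀ X Y, guardP invKey n Ks X → guardP invKey n Ks Y →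
      guardP invKey n Ks (msg.MPair X Y)

/-- `guard n Ks`: messages in which `Nonce n` is guarded by the keys of `Ks`. -/
def guardMsg (invKey : ℕ → ℕ) (n : ℕ) (Ks : Set ℕ) : Set msg := {X | guardP invKey n Ks X}

/-- `Guard n Ks H`: every message of `H` lies in `guard n Ks`. -/
def Guard (invKey : ℕ → ℕ) (n : ℕ) (Ks : Set ℕ) (H : Set msg) : Prop :=
  ∀ X ∈ H, X ∈ guardMsg invKey n Ks

theorem partsP_trans_aux (Z W V : msg)
    (hV : partsP {W} V) (hW : partsP {Z} W) : partsP {Z} V := by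
  induction hV with
  | Inj A hA => rw [Set.mem_singleton_iff] at hA; exact hA ▸ hW
  | Fst A B _ ih => exact partsP.Fst A B ih
  | Snd A B _ ih => exact partsP.Snd A B ih
  | Body K A _ ih => exact partsP.Body K A ih

/-- Protocol-independent secrecy theorem (`Guard_invKey`): if `Nonce n` is
guarded by `Ks` in every message of `G` and `Nonce n` can be obtained by
analyzing `G`, then some key of `Ks` can be obtained by analyzing `G`. -/
theorem Guard_invKey (invKey : ℕ → ℕ) (hinv : ∀ K, invKey (invKey K) = K)
    (G : Set msg) (n : ℕ) (Ks : Set ℕ)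
    (h1 : msg.Nonce n ∈ analz invKey G) (h2 : Guard invKey n Ks G) :
    ∃ K ∈ Ks, msg.Key K ∈ analz invKey G := by
  by_contra hc
  have key : ∀ X, analzP invKey G X → guardP invKey n Ks X := by
    intro X hX
    induction hX with
    | Inj A hA => exact h2 A hA
    | Fst A B _ ih =>
      cases ih with
      | No_Nonce _ h =>
        exact guardP.No_Nonce _ fun hn => h
          (partsP_trans_aux _ _ _ hn (partsP.Fst A B (partsP.Inj _ rfl)))
      | Pr _ _ ha hb => exact ha
    | Snd A B _ ih =>
      cases ih with
      | No_Nonce _ h =>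
        exact guardP.No_Nonce _ fun hn => h
          (partsP_trans_aux _ _ _ hn (partsP.Snd A B (partsP.Inj _ rfl)))
      | Pr _ _ ha hb => exact hb
    | Decrypt K A _ hk ih _ =>
      cases ih with
      | No_Nonce _ h =>
        exact guardP.No_Nonce _ fun hn => h
          (partsP_trans_aux _ _ _ hn (partsP.Body K A (partsP.Inj _ rfl)))
      | Guard _ _ hK => exact absurd ⟨_, hK, hk⟩ hc
      | Cry _ _ ha => exact ha
  cases key _ h1 with
  | No_Nonce _ h => exact h (partsP.Inj _ rfl)
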